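/- arXiv:1502.03065 — 7 statements merged into one kernel-verified Lean document; each statement's English description precedes it below -/
import Mathlib

section
/- Let A be a finite alphabet and let u, v ∈ A*. For every natural number ℓ, the ℓ-th convolution power of H in the incidence algebra I(A*) over ℚ satisfies H^ℓ(u,v) = ℓ! · binom(v,u) if |v| = |u| + ℓ, and H^ℓ(u,v) = 0 otherwise. (Here H^0 = δ, the identity of the incidence algebra, with δ(u,v) = 1 if u = v and 0 otherwise.) -/
/-- `subwordCount v u` is the number of occurrences of `u` as a (scattered) subword of `v`,
i.e. the number of strictly increasing maps `φ` from the positions of `u` to the positions of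
`v` matching the letters. -/
def subwordCount {A : Type*} [DecidableEq A] (v u : List A) : ℕ :=
  ((Finset.univ : Finset (Fin u.length → Fin v.length)).filter
    (fun φ => (∀ i j : Fin u.length, i < j → φ i < φ j) ∧
      ∀ i : Fin u.length, u.get i = v.get (φ i))).card

/-- The identity `δ` of the incidence algebra `I(A*)` over `ℚ`. -/
def deltaW {A : Type*} [DecidableEq A] (u v : List A) : ℚ := if u = v then 1 else 0

/-- Convolution in the incidence algebra `I(A*)` of words under the subword order:
`(FG)(u,v) = ∑_{u ≤ z ≤ v} F(u,z)·G(z,v)`.  The words `z` with `u ≤ z ≤ v` are exactly the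
sublists `z` of `v` with `subwordCount z u > 0`. -/
def convW {A : Type*} [DecidableEq A] (F G : List A → List A → ℚ) (u v : List A) : ℚ :=
  ∑ z ∈ v.sublists.toFinset.filter (fun z => 0 < subwordCount z u), F u z * G z v

/-- Convolution powers, with `F ^ 0 = δ`. -/
def convPowW {A : Type*} [DecidableEq A] (F : List A → List A → ℚ) :
    ℕ → List A → List A → ℚ
  | 0 => deltaW
  | ℓ + 1 => convW F (convPowW F ℓ)

/-- The element `H` of `I(A*)`: `H(u,v) = binom(v,u)` if `|v| = |u| + 1`, else `0`. -/
def HW {A : Type*} [DecidableEq A] (u v : List A) : ℚ :=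
  if v.length = u.length + 1 then (subwordCount v u : ℚ) else 0

def occW {A : Type*} [DecidableEq A] (v u : List A) : Finset (Fin u.length → Fin v.length) :=
  (Finset.univ : Finset (Fin u.length → Fin v.length)).filter
    (fun φ => (∀ i j : Fin u.length, i < j → φ i < φ j) ∧
      ∀ i : Fin u.length, u.get i = v.get (φ i))

theorem swc_nil_right {A : Type*} [DecidableEq A] (v : List A) : subwordCount v [] = 1 := by
  unfold subwordCount
  rw [Finset.filter_true_of_mem]
  · simp
  · intro φ _
    exact ⟨fun i => i.elim0, fun i => i.elim0⟩

theorem swc_nil_cons {A : Type*} [DecidableEq A] (b : A) (u : List A) :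
    subwordCount [] (b :: u) = 0 := by
  unfold subwordCount
  rw [Finset.card_eq_zero, Finset.eq_empty_iff_forall_notMem]
  intro φ _
  exact (φ ⟨0, by simp⟩).elim0

theorem swc_cons_cons {A : Type*} [DecidableEq A] (a b : A) (v u : List A) :
    subwordCount (a :: v) (b :: u) =
      subwordCount v (b :: u) + if a = b then subwordCount v u else 0 := by
  let f : (Fin (u.length + 1) → Fin v.length) → (Fin (u.length + 1) → Fin (v.length + 1)) :=
    fun ψ i => (ψ i).succ
  let g : (Fin u.length → Fin v.length) → (Fin (u.length + 1) → Fin (v.length + 1)) :=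
    fun ψ => Fin.cons 0 (fun i => (ψ i).succ)
  have hf : Function.Injective f := by
    intro x y h
    funext i
    exact Fin.succ_injective _ (congrFun h i)
  have hg : Function.Injective g := by
    intro x y h
    funext i
    have := congrFun h i.succ
    simpa [g] using this
  have key : occW (a :: v) (b :: u) = (occW v (b :: u)).image f ∪
      (if a = b then occW v u else ∅).image g := by
    ext φ
    change Fin (u.length + 1) → Fin (v.length + 1) at φ
    rw [Finset.mem_union, Finset.mem_image, Finset.mem_image]
    constructor
    · intro h
      obtain ⟨h1, h2⟩ := (Finset.mem_filter.1 h).2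
      change ∀ i j : Fin (u.length + 1), i < j → φ i < φ j at h1
      change ∀ i : Fin (u.length + 1), (b :: u).get i = (a :: v).get (φ i) at h2
      by_cases h0 : φ 0 = 0
      · right
        have hne : ∀ i : Fin u.length, φ i.succ ≠ 0 := fun i =>
          Fin.pos_iff_ne_zero.1 (h0 ▸ h1 0 i.succ (Fin.succ_pos i))
        have hab : a = b := by
          have := h2 0
          rw [h0] at this
          exact this.symm
        rw [if_pos hab]
        refine ⟨fun i => (φ i.succ).pred (hne i), ?_, ?_⟩
        · refine Finset.mem_filter.2 ⟨Finset.mem_univ _, ?_, ?_⟩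
          · intro i j hij
            exact Fin.pred_lt_pred_iff.2 (h1 _ _ (Fin.succ_lt_succ_iff.2 hij))
          · intro i
            have := h2 i.succ
            rw [← Fin.succ_pred (φ i.succ) (hne i)] at this
            exact this
        · funext i
          refine Fin.cases ?_ (fun i => ?_) i
          · simp [g, h0]
          · simp [g]
      · left
        have hne : ∀ i : Fin (u.length + 1), φ i ≠ 0 := by
          intro i
          refine Fin.cases h0 (fun i => ?_) i
          exact Fin.pos_iff_ne_zero.1 (lt_of_le_of_lt (Fin.zero_le _) (h1 0 i.succ (Fin.succ_pos i)))
        refine ⟨fun i => (φ i).pred (hne i), ?_, ?_⟩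
        · refine Finset.mem_filter.2 ⟨Finset.mem_univ _, ?_, ?_⟩
          · intro i j hij
            exact Fin.pred_lt_pred_iff.2 (h1 _ _ hij)
          · intro i
            have := h2 i
            rw [← Fin.succ_pred (φ i) (hne i)] at this
            exact this
        · funext i
          simp [f]
    · rintro (⟨ψ, h, rfl⟩ | ⟨ψ, h, rfl⟩)
      · obtain ⟨h1, h2⟩ := (Finset.mem_filter.1 h).2
        refine Finset.mem_filter.2 ⟨Finset.mem_univ _, ?_, ?_⟩
        · intro i j hij
          exact Fin.succ_lt_succ_iff.2 (h1 i j hij)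
        · intro i
          exact h2 i
      · split_ifs at h with hab
        · obtain ⟨h1, h2⟩ := (Finset.mem_filter.1 h).2
          refine Finset.mem_filter.2 ⟨Finset.mem_univ _, ?_, ?_⟩
          · change ∀ i j : Fin (u.length + 1), i < j → g ψ i < g ψ j
            intro i j
            refine Fin.cases ?_ (fun i => ?_) i <;> refine Fin.cases ?_ (fun j => ?_) j
            · intro h; exact absurd h (lt_irrefl _)
            · intro _; simp [g]
            · intro h; exact absurd h (by simp)
            · intro h
              simpa [g] using h1 i j (Fin.succ_lt_succ_iff.1 h)
          · change ∀ i : Fin (u.length + 1), (b :: u).get i = (a :: v).get (g ψ i)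
            intro i
            refine Fin.cases ?_ (fun i => ?_) i
            · exact hab.symm
            · exact h2 i
        · simp at h
  have hd : Disjoint ((occW v (b :: u)).image f) ((if a = b then occW v u else ∅).image g) := by
    rw [Finset.disjoint_left]
    intro φ h1 h2
    obtain ⟨x, _, rfl⟩ := Finset.mem_image.1 h1
    obtain ⟨y, _, h⟩ := Finset.mem_image.1 h2
    have := congrFun h 0
    exact absurd this.symm (Fin.succ_ne_zero _)
  change (occW (a :: v) (b :: u)).card = (occW v (b :: u)).card + if a = b then (occW v u).card else 0
  rw [key, Finset.card_union_of_disjoint hd, Finset.card_image_of_injective _ hf,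
    Finset.card_image_of_injective _ hg]
  split_ifs <;> simp

theorem swc_eq_count {A : Type*} [DecidableEq A] (v : List A) : ∀ u : List A,
    subwordCount v u = v.sublists'.count u := by
  induction v with
  | nil =>
    intro u
    cases u with
    | nil => simp [swc_nil_right]
    | cons b u => simp [swc_nil_cons]
  | cons a v ih =>
    intro u
    rw [List.sublists'_cons, List.count_append]
    cases u with
    | nil =>
      rw [swc_nil_right, ← ih, swc_nil_right, List.count_eq_zero_of_not_mem]
      simp
    | cons b u =>
      rw [swc_cons_cons, ih, ih]
      congr 1
      split_ifs with h
      · subst h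
        exact (List.count_map_of_injective _ _ (List.cons_injective) _).symm
      · rw [List.count_eq_zero_of_not_mem]
        simp [h]

/-- sum over occurrences -/
def SW {A : Type*} [DecidableEq A] (v u : List A) (n : ℕ) : ℚ :=
  (v.sublists'.map (fun z => if z.length = n then (subwordCount z u : ℚ) else 0)).sum

theorem swc_same {A : Type*} [DecidableEq A] (z u : List A) (h : z.length = u.length) :
    subwordCount z u = if z = u then 1 else 0 := by
  induction z generalizing u with
  | nil =>
    cases u with
    | nil => simp [swc_nil_right]
    | cons b u => simp at h
  | cons a z ih =>
    cases u with
    | nil => simp at h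
    | cons b u =>
      rw [swc_cons_cons, ih u (by simpa using h), swc_eq_count, List.count_eq_zero_of_not_mem]
      · by_cases hab : a = b <;> simp [hab]
      · intro hm
        have := (List.mem_sublists'.1 hm).length_le
        simp at this h
        omega

theorem SW_same {A : Type*} [DecidableEq A] (v u : List A) :
    SW v u u.length = subwordCount v u := by
  rw [swc_eq_count]
  unfold SW
  induction v.sublists' with
  | nil => simp
  | cons z l ih =>
    rw [List.map_cons, List.sum_cons, ih, List.count_cons]
    by_cases h : z = u
    · subst h
      simp [swc_same]; ring
    · by_cases h' : z.length = u.length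
      · simp [h', swc_same z u h', h]
      · simp [h', h]

theorem SW_succ {A : Type*} [DecidableEq A] (v : List A) : ∀ u : List A,
    SW v u (u.length + 1) = ((v.length : ℚ) - u.length) * subwordCount v u := by
  induction v with
  | nil =>
    intro u
    cases u with
    | nil => simp [SW]
    | cons b u => simp [SW, swc_nil_cons]
  | cons a v ih =>
    intro u
    have h1 : SW (a :: v) u (u.length + 1) = SW v u (u.length + 1) +
        (v.sublists'.map (fun z => if z.length = u.length then
          (subwordCount (a :: z) u : ℚ) else 0)).sum := by
      simp [SW, List.sublists'_cons, Function.comp_def]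
    rw [h1, ih]
    cases u with
    | nil =>
      have h2 := SW_same v ([] : List A)
      simp only [SW, swc_nil_right] at h2 ⊢
      rw [h2]
      push_cast [List.length_cons, List.length_nil]
      ring
    | cons b u =>
      have h2 := SW_same v (b :: u)
      have h3 : (v.sublists'.map (fun z => if z.length = (b :: u).length then
          (subwordCount (a :: z) (b :: u) : ℚ) else 0)).sum = SW v (b :: u) (b :: u).length +
          (if a = b then 1 else 0) * SW v u (u.length + 1) := by
        unfold SW
        induction v.sublists' with
        | nil => simp
        | cons z l ih2 =>
          rw [List.map_cons, List.sum_cons, ih2, List.map_cons, List.sum_cons, List.map_cons, List.sum_cons, swc_cons_cons]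
          by_cases hab : a = b <;> by_cases hz : z.length = u.length + 1 <;> simp [hab, hz] <;> ring
      rw [h3, h2, ih, swc_cons_cons]
      by_cases hab : a = b <;> simp [hab] <;> ring

/-- Lemma 1: `H^ℓ(u,v) = ℓ! · binom(v,u)` if `|v| = |u| + ℓ`, and `0` otherwise. -/
theorem convPow_HW_apply {A : Type*} [Fintype A] [DecidableEq A] (u v : List A) (ℓ : ℕ) :
    convPowW HW ℓ u v =
      if v.length = u.length + ℓ then (Nat.factorial ℓ : ℚ) * subwordCount v u else 0 := by
  induction ℓ generalizing u v with
  | zero =>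
    change deltaW u v = _
    unfold deltaW
    by_cases h : v.length = u.length
    · simp [h, swc_same v u h, eq_comm]
    · have : u ≠ v := fun e => h (by rw [e])
      simp [h, this]
  | succ ℓ ih =>
    change convW HW (convPowW HW ℓ) u v = _
    unfold convW
    simp only [ih]
    rw [Finset.sum_filter_of_ne]
    · have hp : v.sublists.toFinset = v.sublists'.toFinset :=
        List.toFinset_eq_of_perm _ _ (List.sublists_perm_sublists' v)
      rw [hp]
      have hS := SW_succ v u
      unfold SW at hS
      rw [Finset.sum_list_map_count] at hS
      split_ifs with h
      · have h4 : ((v.length : ℚ) - u.length) = ℓ + 1 := by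
          rw [h]; push_cast; ring
        rw [h4] at hS
        rw [Nat.factorial_succ]
        push_cast
        rw [show ((ℓ : ℚ) + 1) * (Nat.factorial ℓ : ℚ) * (subwordCount v u : ℚ) =
          (Nat.factorial ℓ : ℚ) * ((ℓ + 1) * subwordCount v u) by ring, ← hS, Finset.mul_sum]
        refine Finset.sum_congr rfl fun z _ => ?_
        unfold HW
        by_cases hz : z.length = u.length + 1
        · have : v.length = z.length + ℓ := by omega
          rw [if_pos hz, if_pos this, swc_eq_count v z, nsmul_eq_mul]
          rw [mul_left_comm, mul_comm (subwordCount z u : ℚ)]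
          congr! 4
          ext x y
          simp
        · rw [if_neg hz]; simp
      · refine Finset.sum_eq_zero fun z _ => ?_
        unfold HW
        by_cases hz : z.length = u.length + 1
        · have : ¬ v.length = z.length + ℓ := by omega
          rw [if_neg this, mul_zero]
        · rw [if_neg hz, zero_mul]
    · intro z _ hz
      rw [Nat.pos_iff_ne_zero]
      intro h0
      apply hz
      simp [HW, h0]
end

section
/- Let S denote the set of all (finite) permutations, partially ordered by pattern containment. In the incidence algebra I(S) over ℚ, define P(σ,π) = binom(π,σ) (the number of occurrences of the pattern σ in π) and H(σ,π) = binom(π,σ) if |π| = |σ|+1, else 0. Then P = e^H entrywise; that is, for all permutations σ ≤ π, ∑_{ℓ=0}^{|π|−|σ|} (1/ℓ!) · H^ℓ(σ,π) = binom(π,σ), where H^0 = δ is the identity of the incidence algebra. -/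
/-- `patternCount π σ` is the number of occurrences of the pattern `σ` in the permutation `π`:
strictly increasing maps `φ` such that `π ∘ φ` is order-isomorphic to `σ`.  A permutation of
`{1,…,n}` is modelled as an element of `Σ n, Equiv.Perm (Fin n)`. -/
def patternCount (π σ : Σ n, Equiv.Perm (Fin n)) : ℕ :=
  ((Finset.univ : Finset (Fin σ.1 → Fin π.1)).filter
    (fun φ => (∀ i j : Fin σ.1, i < j → φ i < φ j) ∧
      ∀ i j : Fin σ.1, σ.2 i < σ.2 j ↔ π.2 (φ i) < π.2 (φ j))).card

/-- The identity `δ` of the incidence algebra `I(S)` over `ℚ`. -/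
def deltaP (σ π : Σ n, Equiv.Perm (Fin n)) : ℚ := if σ = π then 1 else 0

/-- Convolution in the incidence algebra `I(S)` of permutations under pattern containment:
`(FG)(σ,π) = ∑_{σ ≤ τ ≤ π} F(σ,τ)·G(τ,π)`.  The permutations `τ` with `σ ≤ τ ≤ π` are
exactly the `τ` of size at most `|π|` with `patternCount τ σ > 0` and `patternCount π τ > 0`. -/
def convP (F G : (Σ n, Equiv.Perm (Fin n)) → (Σ n, Equiv.Perm (Fin n)) → ℚ)
    (σ π : Σ n, Equiv.Perm (Fin n)) : ℚ :=
  ∑ τ ∈ ((Finset.range (π.1 + 1)).sigma fun m =>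
      (Finset.univ : Finset (Equiv.Perm (Fin m)))).filter
        (fun τ => 0 < patternCount τ σ ∧ 0 < patternCount π τ),
    F σ τ * G τ π

/-- Convolution powers, with `F ^ 0 = δ`. -/
def convPowP (F : (Σ n, Equiv.Perm (Fin n)) → (Σ n, Equiv.Perm (Fin n)) → ℚ) :
    ℕ → (Σ n, Equiv.Perm (Fin n)) → (Σ n, Equiv.Perm (Fin n)) → ℚ
  | 0 => deltaP
  | ℓ + 1 => convP F (convPowP F ℓ)

/-- The element `H` of `I(S)`: `H(σ,π) = binom(π,σ)` if `|π| = |σ| + 1`, else `0`. -/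
def HP (σ π : Σ n, Equiv.Perm (Fin n)) : ℚ :=
  if π.1 = σ.1 + 1 then (patternCount π σ : ℚ) else 0

/-- The element `P` of `I(S)`: `P(σ,π) = binom(π,σ)`. -/
def PP (σ π : Σ n, Equiv.Perm (Fin n)) : ℚ := patternCount π σ
/-- occurrence predicate -/
def OccP {k n : ℕ} (σ : Equiv.Perm (Fin k)) (π : Equiv.Perm (Fin n)) (φ : Fin k → Fin n) : Prop :=
  (∀ i j : Fin k, i < j → φ i < φ j) ∧ ∀ i j : Fin k, σ i < σ j ↔ π (φ i) < π (φ j)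

instance {k n : ℕ} (σ : Equiv.Perm (Fin k)) (π : Equiv.Perm (Fin n)) :
    DecidablePred (OccP σ π) := fun φ => by unfold OccP; infer_instance

lemma pc_eq {k n : ℕ} (σ : Equiv.Perm (Fin k)) (π : Equiv.Perm (Fin n)) :
    patternCount ⟨n, π⟩ ⟨k, σ⟩ = ((Finset.univ : Finset (Fin k → Fin n)).filter (OccP σ π)).card := by
  unfold patternCount OccP
  congr

lemma fin_strictMono_id {n : ℕ} (f : Fin n → Fin n) (hf : StrictMono f) : f = id := by
  have hb : Function.Bijective f := Finite.injective_iff_bijective.mp hf.injective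
  have h := StrictMono.range_inj (f := f) (g := id) hf strictMono_id
  exact h.1 (by rw [hb.2.range_eq]; simp)

lemma perm_unique {m : ℕ} (τ τ' : Equiv.Perm (Fin m))
    (h : ∀ i j, τ i < τ j ↔ τ' i < τ' j) : τ = τ' := by
  have : (fun x => τ' (τ.symm x)) = id := by
    apply fin_strictMono_id
    intro a b hab
    have := (h (τ.symm a) (τ.symm b)).1 (by simpa using hab)
    exact this
  ext i
  have h2 := congrFun this (τ i)
  simp at h2
  rw [h2]

lemma std_exists {m n : ℕ} (f : Fin m → Fin n) (hf : Function.Injective f) :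
    ∃ τ : Equiv.Perm (Fin m), ∀ i j, τ i < τ j ↔ f i < f j := by
  have hc : (Finset.univ.image f).card = m := by
    rw [Finset.card_image_of_injective _ hf]; simp
  let e := (Finset.univ.image f).orderIsoOfFin hc
  let g : Fin m → Fin m := fun i => e.symm ⟨f i, by simp⟩
  have hg : Function.Injective g := by
    intro i j hij
    have := e.symm.injective hij
    exact hf (by simpa using this)
  refine ⟨Equiv.ofBijective g (Finite.injective_iff_bijective.mp hg), fun i j => ?_⟩
  simp [g]

lemma super_card {n : ℕ} (t : Finset (Fin n)) :
    ((Finset.univ : Finset (Finset (Fin n))).filter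
      (fun s => t ⊆ s ∧ t.card + 1 = s.card)).card = n - t.card := by
  have : (Finset.univ : Finset (Finset (Fin n))).filter
      (fun s => t ⊆ s ∧ t.card + 1 = s.card) = tᶜ.image (fun a => insert a t) := by
    ext s
    simp [← Finset.exists_eq_insert_iff]
  rw [this, Finset.card_image_of_injOn, Finset.card_compl, Fintype.card_fin]
  intro a ha b hb hab
  have : a ∈ insert b t := by
    have hab : insert a t = insert b t := hab
    rw [← hab]; simp
  simp at ha hb this
  tauto

lemma fiber_card {k n : ℕ} (σ : Equiv.Perm (Fin k)) (π : Equiv.Perm (Fin n))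
    (χ : Fin k → Fin n) (hχ : OccP σ π χ) :
    ((Finset.univ : Finset (Equiv.Perm (Fin (k+1)) × (Fin k → Fin (k+1)) × (Fin (k+1) → Fin n))).filter
      (fun p => (OccP σ p.1 p.2.1 ∧ OccP p.1 π p.2.2) ∧ p.2.2 ∘ p.2.1 = χ)).card = n - k := by
  have hχm : StrictMono χ := fun i j => hχ.1 i j
  have hck : (Finset.univ.image χ).card = k := by
    rw [Finset.card_image_of_injective _ hχm.injective]; simp
  rw [← show n - (Finset.univ.image χ).card = n - k by rw [hck], ← super_card]
  apply Finset.card_bij (fun p _ => Finset.univ.image p.2.2)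
  · rintro ⟨τ, φ, ψ⟩ hp
    simp only [Finset.mem_filter, Finset.mem_univ, true_and] at hp ⊢
    obtain ⟨⟨h1, h2⟩, rfl⟩ := hp
    have hψ : StrictMono ψ := fun i j => h2.1 i j
    refine ⟨?_, ?_⟩
    · intro x
      simp only [Finset.mem_image, Finset.mem_univ, true_and]
      rintro ⟨a, rfl⟩
      exact ⟨_, rfl⟩
    · rw [hck, Finset.card_image_of_injective _ hψ.injective]; simp
  · rintro ⟨τ, φ, ψ⟩ hp ⟨τ', φ', ψ'⟩ hp' heq
    simp only [Finset.mem_filter, Finset.mem_univ, true_and] at hp hp' heq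
    obtain ⟨⟨h1, h2⟩, h3⟩ := hp
    obtain ⟨⟨h1', h2'⟩, h3'⟩ := hp'
    have hψ : StrictMono ψ := fun i j => h2.1 i j
    have hψ' : StrictMono ψ' := fun i j => h2'.1 i j
    have e : ψ = ψ' := by
      apply (StrictMono.range_inj hψ hψ').1
      have := congrArg (fun s : Finset (Fin n) => (s : Set (Fin n))) heq
      simpa using this
    subst e
    have e : φ = φ' := by
      funext i
      apply hψ.injective
      exact congrFun (h3.trans h3'.symm) i
    subst e
    have e : τ = τ' := perm_unique _ _ fun i j => (h2.2 i j).trans (h2'.2 i j).symm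
    rw [e]
  · intro s hs
    simp only [Finset.mem_filter, Finset.mem_univ, true_and] at hs
    obtain ⟨hsub, hcard⟩ := hs
    rw [hck] at hcard
    let ψ := s.orderEmbOfFin hcard.symm
    have hr : ∀ i, ∃ j, ψ j = χ i := by
      intro i
      have : χ i ∈ (s : Set (Fin n)) := hsub (by simp)
      rw [← Finset.range_orderEmbOfFin s hcard.symm] at this
      exact this
    choose φ hφ using hr
    obtain ⟨τ, hτ⟩ := std_exists (fun i => π (ψ i)) (π.injective.comp ψ.injective)
    refine ⟨(τ, φ, ψ), ?_, ?_⟩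
    · simp only [Finset.mem_filter, Finset.mem_univ, true_and]
      refine ⟨⟨⟨?_, ?_⟩, ?_, hτ⟩, funext hφ⟩
      · intro i j hij
        apply ψ.lt_iff_lt.1
        rw [hφ, hφ]; exact hχm hij
      · intro i j
        rw [hτ, hφ, hφ]; exact hχ.2 i j
      · intro i j hij
        exact ψ.strictMono hij
    · apply Finset.coe_injective
      simp [ψ]

lemma occ_comp {k m n : ℕ} {σ : Equiv.Perm (Fin k)} {τ : Equiv.Perm (Fin m)}
    {π : Equiv.Perm (Fin n)} {φ : Fin k → Fin m} {ψ : Fin m → Fin n}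
    (h1 : OccP σ τ φ) (h2 : OccP τ π ψ) : OccP σ π (ψ ∘ φ) :=
  ⟨fun i j h => h2.1 _ _ (h1.1 _ _ h), fun i j => (h1.2 i j).trans (h2.2 _ _)⟩

lemma key {k n : ℕ} (σ : Equiv.Perm (Fin k)) (π : Equiv.Perm (Fin n)) :
    ∑ τ : Equiv.Perm (Fin (k+1)), patternCount ⟨k+1, τ⟩ ⟨k, σ⟩ * patternCount ⟨n, π⟩ ⟨k+1, τ⟩
      = (n - k) * patternCount ⟨n, π⟩ ⟨k, σ⟩ := by
  have h1 : ∑ τ : Equiv.Perm (Fin (k+1)),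
      patternCount ⟨k+1, τ⟩ ⟨k, σ⟩ * patternCount ⟨n, π⟩ ⟨k+1, τ⟩ =
      ((Finset.univ : Finset (Equiv.Perm (Fin (k+1)) × (Fin k → Fin (k+1)) × (Fin (k+1) → Fin n))).filter
      (fun p => (OccP σ p.1 p.2.1 ∧ OccP p.1 π p.2.2))).card := by
    rw [Finset.card_filter, Fintype.sum_prod_type]
    apply Finset.sum_congr rfl
    intro τ _
    rw [pc_eq, pc_eq, ← Finset.card_product, ← Finset.card_filter]
    congr 1
    ext p
    simp
  rw [h1, Finset.card_eq_sum_card_fiberwise (f := fun p => p.2.2 ∘ p.2.1)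
    (t := Finset.univ.filter (OccP σ π))]
  · rw [Finset.sum_congr rfl (g := fun _ => n - k), pc_eq]
    · simp [mul_comm]
    · intro χ hχ
      rw [Finset.filter_filter]
      exact fiber_card σ π χ (by simpa using hχ)
  · rintro ⟨τ, φ, ψ⟩ hp
    simp at hp ⊢
    exact occ_comp hp.1 hp.2

lemma delta_eq {k n : ℕ} (σ : Equiv.Perm (Fin k)) (π : Equiv.Perm (Fin n)) :
    deltaP ⟨k, σ⟩ ⟨n, π⟩ = if n = k then (patternCount ⟨n, π⟩ ⟨k, σ⟩ : ℚ) else 0 := by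
  unfold deltaP
  by_cases hnk : n = k
  · subst hnk
    rw [if_pos rfl, pc_eq]
    by_cases h : σ = π
    · subst h
      have : Finset.univ.filter (OccP σ σ) = {id} := by
        ext φ
        simp only [Finset.mem_filter, Finset.mem_univ, true_and, Finset.mem_singleton]
        constructor
        · intro h
          exact fin_strictMono_id φ fun i j => h.1 i j
        · rintro rfl
          exact ⟨fun _ _ h => h, fun _ _ => Iff.rfl⟩
      simp [this]
    · have : Finset.univ.filter (OccP σ π) = ∅ := by
        ext φ
        simp only [Finset.mem_filter, Finset.mem_univ, true_and, Finset.notMem_empty, iff_false]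
        intro h'
        have e := fin_strictMono_id φ fun i j => h'.1 i j
        subst e
        exact h (perm_unique _ _ h'.2)
      simp [this, h]
  · rw [if_neg hnk, if_neg]
    intro h
    exact hnk (congrArg Sigma.fst h).symm

lemma pow_eq (l : ℕ) : ∀ σ π : Σ n, Equiv.Perm (Fin n), convPowP HP l σ π =
    if π.1 = σ.1 + l then (l.factorial : ℚ) * patternCount π σ else 0 := by
  induction l with
  | zero =>
    rintro ⟨k, σ⟩ ⟨n, π⟩
    simp [convPowP, delta_eq]
  | succ l ih =>
    rintro ⟨k, σ⟩ ⟨n, π⟩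
    simp only [convPowP, convP]
    rw [Finset.sum_filter_of_ne, Finset.sum_sigma]
    · simp only [ih, HP]
      by_cases hn : n = k + (l + 1)
      · rw [if_pos hn, Finset.sum_eq_single (k+1)]
        · have hk := congrArg (Nat.cast : ℕ → ℚ) (key σ π)
          push_cast at hk
          have e : n - k = l + 1 := by omega
          rw [e] at hk
          have e2 : n = k + 1 + l := by omega
          simp only [if_true, if_pos e2]
          calc _ = (l.factorial : ℚ) * ∑ τ : Equiv.Perm (Fin (k+1)),
            (patternCount ⟨k+1, τ⟩ ⟨k, σ⟩ : ℚ) * patternCount ⟨n, π⟩ ⟨k+1, τ⟩ := by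
                rw [Finset.mul_sum]
                apply Finset.sum_congr rfl
                intros; ring
            _ = _ := by
                rw [hk, Nat.factorial_succ]; push_cast; ring
        · intro m _ hm
          simp [hm]
        · intro h
          simp at h
          omega
      · rw [if_neg hn]
        apply Finset.sum_eq_zero
        intro m _
        apply Finset.sum_eq_zero
        intro τ _
        split_ifs <;> first | omega | simp
    · rintro ⟨m, τ⟩ _ h
      rw [ih] at h
      simp only [HP] at h
      constructor
      · apply Nat.pos_of_ne_zero
        intro h0
        simp [h0] at h
      · apply Nat.pos_of_ne_zero
        intro h0
        simp [h0] at h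

lemma pc_le (σ π : Σ n, Equiv.Perm (Fin n)) (h : 0 < patternCount π σ) : σ.1 ≤ π.1 := by
  obtain ⟨k, σ⟩ := σ
  obtain ⟨n, π⟩ := π
  rw [pc_eq, Finset.card_pos] at h
  obtain ⟨φ, hφ⟩ := h
  have hφ : OccP σ π φ := by simpa using hφ
  have hm : StrictMono φ := fun i j => hφ.1 i j
  simpa using Fintype.card_le_of_injective φ hm.injective

/-- Theorem (`P = e^H` in `I(S)`): for all permutations `σ ≤ π`,
`∑_{ℓ=0}^{|π|−|σ|} (1/ℓ!) · H^ℓ(σ,π) = binom(π,σ)`. -/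
theorem P_eq_exp_HP (σ π : Σ n, Equiv.Perm (Fin n)) (h : 0 < patternCount π σ) :
    ∑ ℓ ∈ Finset.range (π.1 - σ.1 + 1),
        (1 / (Nat.factorial ℓ : ℚ)) * convPowP HP ℓ σ π = patternCount π σ := by
  have hle := pc_le σ π h
  rw [Finset.sum_eq_single (π.1 - σ.1)]
  · rw [pow_eq, if_pos (by omega)]
    have : ((π.1 - σ.1).factorial : ℚ) ≠ 0 := by positivity
    field_simp
  · intro l _ hl
    rw [pow_eq, if_neg (by omega), mul_zero]
  · intro h
    simp at h
end

section
/- Let S denote the set of all (finite) permutations, partially ordered by pattern containment, and let H be the element of the incidence algebra I(S) over ℚ defined by H(σ,π) = binom(π,σ) if |π| = |σ|+1, else 0. Then for all permutations σ ≤ π and every natural number ℓ, H^ℓ(σ,π) = ℓ! · binom(π,σ) if |π| = |σ| + ℓ, and H^ℓ(σ,π) = 0 otherwise. -/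
namespace PatHelp

def Occ {k n : ℕ} (s : Equiv.Perm (Fin k)) (p : Equiv.Perm (Fin n)) : Finset (Fin k → Fin n) :=
  (Finset.univ : Finset (Fin k → Fin n)).filter
    (fun φ => (∀ i j : Fin k, i < j → φ i < φ j) ∧
      ∀ i j : Fin k, s i < s j ↔ p (φ i) < p (φ j))

lemma mem_Occ {k n : ℕ} {s : Equiv.Perm (Fin k)} {p : Equiv.Perm (Fin n)} {φ : Fin k → Fin n} :
    φ ∈ Occ s p ↔ StrictMono φ ∧ ∀ i j : Fin k, s i < s j ↔ p (φ i) < p (φ j) := by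
  simp [Occ, StrictMono]

lemma perm_unique {m : ℕ} (s t : Equiv.Perm (Fin m)) (h : ∀ i j, s i < s j ↔ t i < t j) :
    s = t := by
  have hm : StrictMono (fun x => t (s.symm x)) := by
    intro a b hab
    rw [← h]; simpa using hab
  have h1 : (StrictMono.orderIsoOfSurjective _ hm (t.surjective.comp s.symm.surjective)) =
      OrderIso.refl (Fin m) := Subsingleton.elim _ _
  ext i
  have := DFunLike.congr_fun h1 (s i)
  simp at this
  rw [this]

lemma std_exists {m n : ℕ} (f : Fin m → Fin n) (hf : Function.Injective f) :
    ∃ t : Equiv.Perm (Fin m), ∀ i j, t i < t j ↔ f i < f j := by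
  have hc : (Finset.univ.image f).card = m := by
    rw [Finset.card_image_of_injective _ hf]; simp
  let e := (Finset.univ.image f).orderIsoOfFin hc
  let g : Fin m → Fin m := fun i => e.symm ⟨f i, by simp⟩
  have hg : ∀ i j, g i < g j ↔ f i < f j := by
    intro i j
    simp [g]
  have hi : Function.Injective g := by
    intro i j hij
    apply hf
    simpa [g] using hij
  exact ⟨Equiv.ofBijective g (Finite.injective_iff_bijective.1 hi), hg⟩

lemma card_sup {k n : ℕ} (U : Finset (Fin n)) (hU : U.card = k) :
    ((Finset.univ : Finset (Finset (Fin n))).filter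
      (fun T => U ⊆ T ∧ T.card = k + 1)).card = n - k := by
  have : (Finset.univ : Finset (Finset (Fin n))).filter
      (fun T => U ⊆ T ∧ T.card = k + 1) = Uᶜ.image (fun a => insert a U) := by
    ext T
    simp only [Finset.mem_filter, Finset.mem_univ, true_and, Finset.mem_image, Finset.mem_compl]
    constructor
    · rintro ⟨h1, h2⟩
      have h3 : (T \ U).card = 1 := by rw [Finset.card_sdiff_of_subset h1]; omega
      obtain ⟨a, ha⟩ := Finset.card_eq_one.1 h3
      have h4 : a ∈ T \ U := by rw [ha]; simp
      refine ⟨a, (Finset.mem_sdiff.1 h4).2, ?_⟩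
      rw [← Finset.sdiff_union_of_subset h1, ha]; rfl
    · rintro ⟨a, ha, rfl⟩
      exact ⟨Finset.subset_insert _ _, by rw [Finset.card_insert_of_notMem ha, hU]⟩
  rw [this, Finset.card_image_of_injOn, Finset.card_compl, hU, Fintype.card_fin]
  intro a ha b hb hab
  simp only [Finset.coe_compl, Set.mem_compl_iff, Finset.mem_coe] at ha hb
  have : a ∈ insert b U := by
    have h : insert a U = insert b U := hab
    rw [← h]; simp
  rcases Finset.mem_insert.1 this with h | h
  · exact h
  · exact absurd h ha

lemma key {k n : ℕ} (s : Equiv.Perm (Fin k)) (p : Equiv.Perm (Fin n)) :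
    ∑ t : Equiv.Perm (Fin (k+1)), (Occ s t).card * (Occ t p).card = (n - k) * (Occ s p).card := by
  have h1 : ∑ t : Equiv.Perm (Fin (k+1)), (Occ s t).card * (Occ t p).card =
      ((Finset.univ : Finset (Equiv.Perm (Fin (k+1)))).sigma
        (fun t => Occ s t ×ˢ Occ t p)).card := by
    rw [Finset.card_sigma]; simp
  have h2 : (n - k) * (Occ s p).card = ((Occ s p).sigma (fun φ =>
      (Finset.univ : Finset (Finset (Fin n))).filter
      (fun T => Finset.univ.image φ ⊆ T ∧ T.card = k + 1))).card := by
    rw [Finset.card_sigma, Finset.sum_congr rfl (g := fun _ => n - k), Finset.sum_const, smul_eq_mul,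
      mul_comm]
    intro φ hφ
    apply card_sup
    rw [Finset.card_image_of_injective _ (mem_Occ.1 hφ).1.injective]; simp
  rw [h1, h2]
  refine Finset.card_bij (fun x _ => ⟨x.2.2 ∘ x.2.1, Finset.univ.image x.2.2⟩) ?_ ?_ ?_
  · rintro ⟨t, ψ, χ⟩ h
    simp only [Finset.mem_sigma, Finset.mem_univ, true_and, Finset.mem_product, mem_Occ] at h
    obtain ⟨⟨a, b⟩, c, d⟩ := h
    simp only [Finset.mem_sigma, Finset.mem_filter, Finset.mem_univ, true_and, mem_Occ]
    refine ⟨⟨c.comp a, fun i j => by rw [b, d]; rfl⟩, ?_, ?_⟩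
    · intro x; simp only [Finset.mem_image, Finset.mem_univ, true_and, Function.comp]
      rintro ⟨i, rfl⟩; exact ⟨_, rfl⟩
    · rw [Finset.card_image_of_injective _ c.injective]; simp
  · rintro ⟨t, ψ, χ⟩ h ⟨t', ψ', χ'⟩ h' heq
    simp only [Finset.mem_sigma, Finset.mem_univ, true_and, Finset.mem_product, mem_Occ] at h h'
    obtain ⟨⟨a, b⟩, c, d⟩ := h
    obtain ⟨⟨a', b'⟩, c', d'⟩ := h'
    simp only [Sigma.mk.injEq, heq_eq_eq] at heq
    obtain ⟨e1, e2⟩ := heq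
    have e3 : χ = χ' := by
      apply (StrictMono.range_inj c c').1
      simpa using congrArg (fun T : Finset (Fin n) => (T : Set (Fin n))) e2
    subst e3
    have e4 : ψ = ψ' := c.injective.comp_left e1
    have e5 : t = t' := perm_unique _ _ fun i j => by rw [d, d']
    subst e4 e5
    rfl
  · rintro ⟨φ, T⟩ h
    simp only [Finset.mem_sigma, Finset.mem_filter, Finset.mem_univ, true_and, mem_Occ] at h
    obtain ⟨⟨a, b⟩, c, d⟩ := h
    let χ := T.orderEmbOfFin d
    have hr : Set.range χ = T := Finset.range_orderEmbOfFin T d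
    have hx : ∀ i, ∃ j, χ j = φ i := by
      intro i
      have : φ i ∈ (T : Set (Fin n)) := c (Finset.mem_image_of_mem _ (Finset.mem_univ i))
      rw [← hr] at this; exact this
    choose ψ hψ using hx
    obtain ⟨t, ht⟩ := std_exists (fun i => p (χ i)) (p.injective.comp χ.injective)
    refine ⟨⟨t, ψ, χ⟩, ?_, ?_⟩
    · simp only [Finset.mem_sigma, Finset.mem_univ, true_and, Finset.mem_product, mem_Occ]
      refine ⟨⟨?_, ?_⟩, χ.strictMono, ht⟩
      · intro i j hij
        rw [← χ.lt_iff_lt, hψ, hψ]; exact a hij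
      · intro i j
        rw [ht, b, hψ, hψ]
    · have e1 : (χ : Fin (k+1) → Fin n) ∘ ψ = φ := funext hψ
      have e2 : Finset.univ.image χ = T := by
        apply Finset.coe_injective; simpa using hr
      simp only [e1, e2]

lemma same_size {k : ℕ} (s p : Equiv.Perm (Fin k)) (h : 0 < (Occ s p).card) : s = p ∧ (Occ s p).card = 1 := by
  have hid : ∀ φ : Fin k → Fin k, StrictMono φ → φ = id := by
    intro φ hφ
    apply (StrictMono.range_inj hφ strictMono_id).1
    rw [(Finite.injective_iff_surjective.1 hφ.injective).range_eq]; simp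
  obtain ⟨φ, hφ⟩ := Finset.card_pos.1 h
  have h1 := hid φ (mem_Occ.1 hφ).1
  subst h1
  refine ⟨perm_unique _ _ (mem_Occ.1 hφ).2, ?_⟩
  rw [Finset.card_eq_one]
  refine ⟨id, ?_⟩
  ext φ
  simp only [Finset.mem_singleton]
  exact ⟨fun h => hid φ (mem_Occ.1 h).1, fun h => h ▸ hφ⟩

lemma pc_eq (π σ : Σ n, Equiv.Perm (Fin n)) : patternCount π σ = (Occ σ.2 π.2).card := rfl

end PatHelp

/-- For all permutations `σ ≤ π` and every `ℓ`, `H^ℓ(σ,π) = ℓ! · binom(π,σ)` if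
`|π| = |σ| + ℓ`, and `0` otherwise. -/
theorem convPow_HP_apply (σ π : Σ n, Equiv.Perm (Fin n)) (h : 0 < patternCount π σ) (ℓ : ℕ) :
    convPowP HP ℓ σ π =
      if π.1 = σ.1 + ℓ then (Nat.factorial ℓ : ℚ) * patternCount π σ else 0 := by
  induction ℓ generalizing σ π with
  | zero =>
    simp only [convPowP, deltaP, add_zero, Nat.factorial_zero, Nat.cast_one, one_mul]
    obtain ⟨k, s⟩ := σ
    obtain ⟨n, p⟩ := π
    by_cases hk : n = k
    · subst hk
      obtain ⟨h1, h2⟩ := PatHelp.same_size s p h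
      rw [PatHelp.pc_eq]
      simp [h2]
      exact h1
    · rw [if_neg, if_neg hk]
      intro he
      exact hk (congrArg Sigma.fst he).symm
  | succ ℓ ih =>
    simp only [convPowP, convP]
    split_ifs with hn
    · have e1 : ∀ τ ∈ ((Finset.range (π.1 + 1)).sigma fun m =>
          (Finset.univ : Finset (Equiv.Perm (Fin m)))).filter
          (fun τ => 0 < patternCount τ σ ∧ 0 < patternCount π τ),
          HP σ τ * convPowP HP ℓ τ π =
            if τ.1 = σ.1 + 1 then
              (Nat.factorial ℓ : ℚ) * ((patternCount τ σ * patternCount π τ : ℕ) : ℚ) else 0 := by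
        intro τ hτ
        rw [ih τ π (Finset.mem_filter.1 hτ).2.2]
        unfold HP
        split_ifs with h1 h2
        · push_cast; ring
        · omega
        · simp
        · simp
      rw [Finset.sum_congr rfl e1, Finset.sum_filter_of_ne, Finset.sum_sigma,
        Finset.sum_eq_single (σ.1 + 1)]
      · simp only [if_true]
        rw [← Finset.mul_sum, ← Nat.cast_sum]
        have := PatHelp.key σ.2 π.2
        simp only [PatHelp.pc_eq]
        rw [this, show π.1 - σ.1 = ℓ + 1 by omega, Nat.factorial_succ]
        push_cast; ring
      · intro m _ hm
        simp [hm]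
      · intro hm
        exact absurd (Finset.mem_range.2 (by omega)) hm
      · intro τ _ hne
        constructor
        · by_contra h0
          apply hne; simp [Nat.eq_zero_of_not_pos h0]
        · by_contra h0
          apply hne; simp [Nat.eq_zero_of_not_pos h0]
    · apply Finset.sum_eq_zero
      intro τ hτ
      rw [ih τ π (Finset.mem_filter.1 hτ).2.2]
      unfold HP
      split_ifs with h1 h2
      · omega
      · simp
      · simp
      · simp
end

section
/- (Generalized Pascal formula.) Let A be a finite alphabet, let u and v be words over A, let a and b be letters of A, let k = |ub| = |u| + 1, and let R ⊆ {0,1,…,k}. Then binom(va; ub, R) = [k ∉ R] · binom(v; ub, R) + [a = b] · binom(v; u, R \ {k}), where [ψ] denotes 1 if the condition ψ holds and 0 otherwise, and binom(v; u, R \ {k}) is interpreted with the restriction set (R \ {k}) ∩ {0,1,…,|u|}. -/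
/-- The extension of an occurrence `φ : [k] → [n]` (here 0-indexed, as a map
`Fin k → Fin n`) to `{0,1,…,k+1}`, in 1-based position values: `φ(0) = 0`,
`φ(i) = (φ i) + 1` (converting 0-based to 1-based) for `1 ≤ i ≤ k`, and `φ(k+1) = n+1`. -/
def extOcc {k n : ℕ} (φ : Fin k → Fin n) : ℕ → ℕ
  | 0 => 0
  | i + 1 => if h : i < k then (φ ⟨i, h⟩ : ℕ) + 1 else n + 1

/-- `vOccCount v u R` is the number of occurrences of the restricted word (pair) `(u,R)` in
`v`: strictly increasing letter-matching maps `φ` from the positions of `u` to those of `v`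
such that `φ(i+1) = φ(i) + 1` for all `i ∈ R`, with the conventions `φ(0) = 0` and
`φ(|u|+1) = |v|+1`. -/
def vOccCount {A : Type*} [DecidableEq A] (v u : List A) (R : Finset ℕ) : ℕ :=
  ((Finset.univ : Finset (Fin u.length → Fin v.length)).filter
    (fun φ => (∀ i j : Fin u.length, i < j → φ i < φ j) ∧
      (∀ i : Fin u.length, u.get i = v.get (φ i)) ∧
      ∀ i ∈ R, extOcc φ (i + 1) = extOcc φ i + 1)).card

/-- generic count -/
def cntOcc {A : Type*} [DecidableEq A] (k n : ℕ) (U V : ℕ → Option A) (R : Finset ℕ) : ℕ :=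
  ((Finset.univ : Finset (Fin k → Fin n)).filter
    (fun φ => (∀ i j : Fin k, i < j → φ i < φ j) ∧
      (∀ i : Fin k, U i = V (φ i)) ∧
      ∀ i ∈ R, extOcc φ (i + 1) = extOcc φ i + 1)).card

theorem vOccCount_eq_cnt {A : Type*} [DecidableEq A] (v u : List A) (R : Finset ℕ) :
    vOccCount v u R = cntOcc u.length v.length (fun i => u[i]?) (fun i => v[i]?) R := by
  unfold vOccCount cntOcc
  congr 1
  ext φ
  simp

theorem cntOcc_congr {A : Type*} [DecidableEq A] (k n : ℕ) (U V U' V' : ℕ → Option A)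
    (R : Finset ℕ) (hU : ∀ i < k, U i = U' i) (hV : ∀ i < n, V i = V' i) :
    cntOcc k n U V R = cntOcc k n U' V' R := by
  unfold cntOcc
  congr 1
  ext φ
  simp only [Finset.mem_filter, Finset.mem_univ, true_and]
  have : ∀ i : Fin k, (U i = V (φ i)) ↔ (U' i = V' (φ i)) := fun i => by
    rw [hU i i.2, hV _ (φ i).2]
  simp only [this]

theorem extOcc_castSucc {k n : ℕ} (φ : Fin (k+1) → Fin n) (i : ℕ) (hi : i ≤ k + 1) :
    extOcc (fun j => (φ j).castSucc) i = extOcc φ i := by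
  cases i with
  | zero => rfl
  | succ i => simp [extOcc, show i < k + 1 by omega]

theorem extOcc_snoc {k n : ℕ} (φ : Fin k → Fin n) (i : ℕ) (hi : i ≤ k + 1) :
    extOcc (Fin.snoc (α := fun _ => Fin (n+1)) (fun j => (φ j).castSucc) (Fin.last n)) i
      = extOcc φ i := by
  cases i with
  | zero => rfl
  | succ i =>
    rcases Nat.lt_or_ge i k with h | h
    · simp [extOcc, h, show i < k + 1 by omega, Fin.snoc]
    · obtain rfl : i = k := by omega
      simp [extOcc, Fin.snoc]

theorem cntOcc_pascal {A : Type*} [DecidableEq A] (k n : ℕ) (U V : ℕ → Option A) (R : Finset ℕ)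
    (hR : ∀ i ∈ R, i ≤ k + 1) :
    cntOcc (k+1) (n+1) U V R =
      (if k + 1 ∉ R then 1 else 0) * cntOcc (k+1) n U V R +
      (if V n = U k then 1 else 0) *
        cntOcc k n U V ((R \ {k+1}) ∩ Finset.range (k + 1)) := by
  conv_lhs => unfold cntOcc
  rw [← Finset.card_filter_add_card_filter_not (fun φ => φ (Fin.last k) ≠ Fin.last n)]
  congr 1
  · by_cases h : k + 1 ∉ R
    · rw [if_pos h, one_mul]
      symm
      apply Finset.card_bij (fun φ _ => fun j => (φ j).castSucc)
      · intro φ hφ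
        simp only [Finset.mem_filter, Finset.mem_univ, true_and] at hφ ⊢
        obtain ⟨h1, h2, h3⟩ := hφ
        refine ⟨⟨fun i j hij => by simpa using h1 i j hij, by simpa using h2, ?_⟩,
          (Fin.castSucc_lt_last _).ne⟩
        intro i hi
        have := hR i hi
        have h' : i ≠ k + 1 := fun e => h (e ▸ hi)
        rw [extOcc_castSucc _ _ (by omega), extOcc_castSucc _ _ (by omega)]
        exact h3 i hi
      · intro φ _ ψ _ e
        funext j
        exact Fin.castSucc_injective _ (congrFun e j)
      · intro ψ hψ
        simp only [Finset.mem_filter, Finset.mem_univ, true_and] at hψ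
        obtain ⟨⟨h1, h2, h3⟩, h4⟩ := hψ
        have h5 : ∀ j, ψ j ≠ Fin.last n := by
          intro j hj
          rcases (Fin.le_last j).lt_or_eq with hl | rfl
          · have := h1 _ _ hl
            rw [hj] at this
            exact absurd this (Fin.le_last _).not_gt
          · exact h4 hj
        have e : ψ = fun j => ((ψ j).castPred (h5 j)).castSucc := by
          funext j; simp
        refine ⟨fun j => (ψ j).castPred (h5 j), ?_, e.symm⟩
        simp only [Finset.mem_filter, Finset.mem_univ, true_and]
        refine ⟨fun i j hij => by simpa using h1 i j hij, by simpa using h2, ?_⟩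
        intro i hi
        have := hR i hi
        have h' : i ≠ k + 1 := fun e => h (e ▸ hi)
        rw [← extOcc_castSucc _ _ (by omega), ← extOcc_castSucc _ i (by omega), ← e]
        exact h3 i hi
    · rw [if_neg h, zero_mul, Finset.card_eq_zero, Finset.filter_eq_empty_iff]
      intro φ hφ
      simp only [Finset.mem_filter, Finset.mem_univ, true_and] at hφ
      have := hφ.2.2 (k+1) (not_not.1 h)
      simp only [extOcc, lt_irrefl, dite_false, Nat.lt_succ_self, dite_true] at this
      rw [not_not]
      apply Fin.ext
      simp only [Fin.val_last]
      have e : (Fin.last k) = ⟨k, Nat.lt_succ_self k⟩ := rfl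
      rw [e]
      omega
  · split_ifs with h
    · rw [one_mul]
      symm
      apply Finset.card_bij (fun φ _ =>
        Fin.snoc (α := fun _ => Fin (n+1)) (fun j => (φ j).castSucc) (Fin.last n))
      · intro φ hφ
        simp only [Finset.mem_filter, Finset.mem_univ, true_and] at hφ ⊢
        obtain ⟨h1, h2, h3⟩ := hφ
        refine ⟨⟨?_, ?_, ?_⟩, by simp⟩
        · intro i j hij
          induction j using Fin.lastCases with
          | last =>
            induction i using Fin.lastCases with
            | last => exact absurd hij (lt_irrefl _)
            | cast i => simp [Fin.castSucc_lt_last]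
          | cast j =>
            induction i using Fin.lastCases with
            | last => exact absurd hij (Fin.le_last _).not_gt
            | cast i => simpa using h1 i j (by simpa using hij)
        · intro i
          induction i using Fin.lastCases with
          | last => simpa using h.symm
          | cast i => simpa using h2 i
        · intro i hi
          have := hR i hi
          by_cases h' : i = k + 1
          · subst h'
            rw [extOcc_snoc _ (k+1) le_rfl]
            simp [extOcc]
          · rw [extOcc_snoc _ _ (by omega), extOcc_snoc _ _ (by omega)]
            exact h3 i (by simp [hi, h']; omega)
      · intro φ _ ψ _ e
        funext j
        have := congrFun e j.castSucc
        simpa using this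
      · intro ψ hψ
        simp only [Finset.mem_filter, Finset.mem_univ, true_and, not_not] at hψ
        obtain ⟨⟨h1, h2, h3⟩, h4⟩ := hψ
        have h5 : ∀ j : Fin k, ψ j.castSucc ≠ Fin.last n := by
          intro j hj
          have := h1 _ _ (Fin.castSucc_lt_last j)
          rw [hj] at this
          exact absurd this (Fin.le_last _).not_gt
        have e : ψ = Fin.snoc (α := fun _ => Fin (n+1))
            (fun j : Fin k => ((ψ j.castSucc).castPred (h5 j)).castSucc) (Fin.last n) := by
          funext j
          induction j using Fin.lastCases with
          | last => simpa using h4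
          | cast j => simp
        refine ⟨fun j => (ψ j.castSucc).castPred (h5 j), ?_, e.symm⟩
        simp only [Finset.mem_filter, Finset.mem_univ, true_and]
        refine ⟨fun i j hij => by simpa using h1 i.castSucc j.castSucc (by simpa using hij),
          fun i => by simpa using h2 i.castSucc, ?_⟩
        intro i hi
        simp only [Finset.mem_inter, Finset.mem_sdiff, Finset.mem_range] at hi
        rw [← extOcc_snoc _ _ (by omega), ← extOcc_snoc _ i (by omega), ← e]
        exact h3 i hi.1.1
    · rw [zero_mul, Finset.card_eq_zero, Finset.filter_eq_empty_iff]
      intro φ hφ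
      simp only [Finset.mem_filter, Finset.mem_univ, true_and] at hφ
      rw [not_not]
      intro h'
      have := hφ.2.1 (Fin.last k)
      rw [h'] at this
      exact h this.symm

/-- Generalized Pascal formula: for words `u,v`, letters `a,b`, `k = |ub|` and
`R ⊆ {0,1,…,k}`,
`binom(va; ub, R) = [k ∉ R]·binom(v; ub, R) + [a = b]·binom(v; u, (R \ {k}) ∩ {0,…,|u|})`. -/
theorem vOccCount_pascal {A : Type*} [Fintype A] [DecidableEq A] (u v : List A) (a b : A)
    (R : Finset ℕ) (hR : R ⊆ Finset.range ((u ++ [b]).length + 1)) :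
    vOccCount (v ++ [a]) (u ++ [b]) R =
      (if (u ++ [b]).length ∉ R then 1 else 0) * vOccCount v (u ++ [b]) R +
      (if a = b then 1 else 0) *
        vOccCount v u ((R \ {(u ++ [b]).length}) ∩ Finset.range (u.length + 1)) := by
  have hlen : ∀ (w : List A) (c : A), (w ++ [c]).length = w.length + 1 := by simp
  simp only [vOccCount_eq_cnt, hlen] at hR ⊢
  rw [cntOcc_pascal _ _ _ _ _ (fun i hi => by have := Finset.mem_range.1 (hR hi); omega)]
  congr 1
  · congr 1
    apply cntOcc_congr
    · intros; rfl
    · intro i hi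
      simp [List.getElem?_append_left hi]
  · congr 1
    · simp
    · apply cntOcc_congr
      · intro i hi
        simp [List.getElem?_append_left hi]
      · intro i hi
        simp [List.getElem?_append_left hi]
end

section
/- Let n and k be nonnegative integers, let R ⊆ {0,1,…,k}, and let R^c = {0,1,…,k} \ R. Define binom(n; k, R) as the number of subsets {s₁ < s₂ < … < s_k} of {1,…,n} such that s_{i+1} = s_i + 1 for all i ∈ R, with the conventions s₀ = 0 and s_{k+1} = n + 1. Then binom(n; k, R) = ∑_{ℓ=0}^{n} (−1)^{ℓ−k} · binom(ℓ; k, R^c) · C(n,ℓ), where C(n,ℓ) is the ordinary binomial coefficient. -/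
/-- The extension of a strictly increasing sequence `s₁ < … < s_k` in `{1,…,n}` (here given
0-indexed as a map `Fin k → Fin n`) by the conventions `s₀ = 0` and `s_{k+1} = n+1`;
1-based values. -/
def extSeq {k n : ℕ} (s : Fin k → Fin n) : ℕ → ℕ
  | 0 => 0
  | i + 1 => if h : i < k then (s ⟨i, h⟩ : ℕ) + 1 else n + 1

/-- The generalized binomial coefficient `binom(n; k, R)`: the number of `k`-element subsets
`{s₁ < s₂ < … < s_k}` of `{1,…,n}` such that `s_{i+1} = s_i + 1` for all `i ∈ R`, with the
conventions `s₀ = 0` and `s_{k+1} = n + 1`. -/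
def gbinom (n k : ℕ) (R : Finset ℕ) : ℕ :=
  ((Finset.univ : Finset (Fin k → Fin n)).filter
    (fun s => (∀ i j : Fin k, i < j → s i < s j) ∧
      ∀ i ∈ R, extSeq s (i + 1) = extSeq s i + 1)).card

def gbV (n k : ℕ) (R : Finset ℕ) : Finset (Fin k → Fin n) :=
  ((Finset.univ : Finset (Fin k → Fin n)).filter
    (fun s => (∀ i j : Fin k, i < j → s i < s j) ∧
      ∀ i ∈ R, extSeq s (i + 1) = extSeq s i + 1))

def gbA {n k : ℕ} (t : Fin k → Fin n) : Fin (k + 1) → Fin (n + 1) :=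
  Fin.cons 0 (fun i => (t i).succ)

def gbB {n k : ℕ} (t : Fin (k + 1) → Fin n) : Fin (k + 1) → Fin (n + 1) :=
  fun i => (t i).succ

noncomputable def gbShift (R : Finset ℕ) : Finset ℕ := R.preimage (fun i => i + 1) (by intro a; simp)

theorem mem_gbShift (R : Finset ℕ) (i : ℕ) : i ∈ gbShift R ↔ i + 1 ∈ R := by
  unfold gbShift
  exact Finset.mem_preimage

theorem ext_gbA {n k : ℕ} (t : Fin k → Fin n) (i : ℕ) :
    extSeq (gbA t) (i + 1) = extSeq t i + 1 := by
  cases i with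
  | zero => simp [extSeq, gbA]
  | succ i =>
    by_cases h : i < k
    · have h' : i + 1 < k + 1 := by omega
      have e : gbA t ⟨i + 1, h'⟩ = (t ⟨i, h⟩).succ := rfl
      simp only [extSeq, h, h', dif_pos, e, Fin.val_succ]
    · simp [extSeq, h]

theorem ext_gbB {n k : ℕ} (t : Fin (k + 1) → Fin n) (i : ℕ) :
    extSeq (gbB t) (i + 1) = extSeq t (i + 1) + 1 := by
  by_cases h : i < k + 1 <;> simp [extSeq, gbB, h]

theorem gbA_mem {n k : ℕ} (R : Finset ℕ) (t : Fin k → Fin n) :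
    gbA t ∈ gbV (n + 1) (k + 1) R ↔ t ∈ gbV n k (gbShift R) := by
  simp only [gbV, Finset.mem_filter, Finset.mem_univ, true_and, mem_gbShift]
  refine and_congr ?_ ?_
  · constructor
    · intro h i j hij
      simpa [gbA] using h i.succ j.succ (by simpa using hij)
    · intro h i j
      refine Fin.cases ?_ (fun i => ?_) i <;> refine Fin.cases ?_ (fun j => ?_) j
      · simp
      · simp [gbA]
      · simp
      · simpa [gbA] using h i j
  · constructor
    · intro h i hi
      have := h _ hi
      rw [ext_gbA, ext_gbA] at this
      omega
    · intro h i hi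
      cases i with
      | zero => simp [extSeq, gbA]
      | succ i =>
        rw [ext_gbA, ext_gbA, h i hi]

theorem gbB_mem {n k : ℕ} (R : Finset ℕ) (t : Fin (k + 1) → Fin n) :
    gbB t ∈ gbV (n + 1) (k + 1) R ↔ 0 ∉ R ∧ t ∈ gbV n (k + 1) R := by
  simp only [gbV, Finset.mem_filter, Finset.mem_univ, true_and]
  constructor
  · rintro ⟨h1, h2⟩
    have h0 : 0 ∉ R := by
      intro h0
      have := h2 0 h0
      simp [extSeq, gbB] at this
    refine ⟨h0, fun i j hij => by simpa [gbB] using h1 i j hij, fun i hi => ?_⟩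
    have := h2 i hi
    cases i with
    | zero => exact absurd hi h0
    | succ i => rw [ext_gbB, ext_gbB] at this; omega
  · rintro ⟨h0, h1, h2⟩
    refine ⟨fun i j hij => by simpa [gbB] using h1 i j hij, fun i hi => ?_⟩
    have := h2 i hi
    cases i with
    | zero => exact absurd hi h0
    | succ i => rw [ext_gbB, ext_gbB, this]

theorem gbA_inj {n k : ℕ} : Function.Injective (gbA : (Fin k → Fin n) → _) := by
  intro s t h
  funext i
  simpa [gbA] using congrFun h i.succ

theorem gbB_inj {n k : ℕ} : Function.Injective (gbB : (Fin (k + 1) → Fin n) → _) := by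
  intro s t h
  funext i
  simpa [gbB] using congrFun h i

theorem gb_rec (n k : ℕ) (R : Finset ℕ) :
    gbinom (n + 1) (k + 1) R =
      gbinom n k (gbShift R) + if 0 ∈ R then 0 else gbinom n (k + 1) R := by
  have key : gbV (n + 1) (k + 1) R = (gbV n k (gbShift R)).image gbA ∪
      (if 0 ∈ R then ∅ else gbV n (k + 1) R).image gbB := by
    ext s
    constructor
    · intro hs
      have hm := (Finset.mem_filter.1 hs).2.1
      rw [Finset.mem_union, Finset.mem_image, Finset.mem_image]
      by_cases h0 : s 0 = 0
      · left
        have hp : ∀ i : Fin k, s i.succ ≠ 0 := fun i =>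
          Fin.ne_zero_of_lt (hm 0 i.succ (Fin.succ_pos i))
        have e : gbA (fun i => (s i.succ).pred (hp i)) = s := by
          funext i
          refine Fin.cases ?_ (fun i => ?_) i <;> simp [gbA, h0]
        exact ⟨_, (gbA_mem R _).1 (by rw [e]; exact hs), e⟩
      · right
        have hp : ∀ i : Fin (k + 1), s i ≠ 0 := fun i => by
          refine Fin.cases h0 (fun i => ?_) i
          exact Fin.ne_zero_of_lt (hm 0 i.succ (Fin.succ_pos i))
        have e : gbB (fun i => (s i).pred (hp i)) = s := by
          funext i
          simp [gbB]
        have := (gbB_mem R (fun i => (s i).pred (hp i))).1 (by rw [e]; exact hs)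
        refine ⟨_, ?_, e⟩
        rw [if_neg this.1]
        exact this.2
    · rw [Finset.mem_union, Finset.mem_image, Finset.mem_image]
      rintro (⟨t, ht, rfl⟩ | ⟨t, ht, rfl⟩)
      · exact (gbA_mem R t).2 ht
      · rw [gbB_mem]
        split_ifs at ht with h
        · simp at ht
        · exact ⟨h, ht⟩
  have hd : Disjoint ((gbV n k (gbShift R)).image gbA)
      ((if 0 ∈ R then ∅ else gbV n (k + 1) R).image gbB) := by
    rw [Finset.disjoint_left]
    intro s h1 h2
    obtain ⟨t, -, rfl⟩ := Finset.mem_image.1 h1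
    obtain ⟨u, -, hu⟩ := Finset.mem_image.1 h2
    have := congrFun hu 0
    simp [gbA, gbB] at this
  change (gbV (n + 1) (k + 1) R).card = _
  rw [key, Finset.card_union_of_disjoint hd, Finset.card_image_of_injective _ gbA_inj,
    Finset.card_image_of_injective _ gbB_inj]
  split_ifs <;> rfl

theorem gb_zero_succ (k : ℕ) (R : Finset ℕ) : gbinom 0 (k + 1) R = 0 := by
  unfold gbinom
  rw [Finset.card_eq_zero, Finset.eq_empty_iff_forall_notMem]
  intro s
  exact (s 0).elim0

theorem gb_k_zero (n : ℕ) (R : Finset ℕ) (hR : R ⊆ Finset.range 1) :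
    gbinom n 0 R = if 0 ∈ R then (if n = 0 then 1 else 0) else 1 := by
  have h1 : ∀ i ∈ R, i = 0 := fun i hi => by simpa using hR hi
  unfold gbinom
  rw [Finset.card_filter]
  by_cases h : 0 ∈ R
  · have : R = {0} := by
      ext i; simp only [Finset.mem_singleton]; exact ⟨h1 i, fun e => e ▸ h⟩
    subst this
    simp [extSeq]
  · have : R = ∅ := by
      ext i; simp only [Finset.notMem_empty, iff_false]; exact fun e => h (h1 i e ▸ e)
    subst this
    simp

theorem gb_lt (k : ℕ) : ∀ (n : ℕ) (R : Finset ℕ), n < k → gbinom n k R = 0 := by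
  induction k with
  | zero => intro n R h; omega
  | succ k ih =>
    intro n
    induction n with
    | zero => intro R _; exact gb_zero_succ k R
    | succ n ihn =>
      intro R h
      rw [gb_rec, ih n _ (by omega), ihn R (by omega)]
      simp

/-- Signed binomial transform. -/
def gbT (b : ℕ → ℚ) (n : ℕ) : ℚ :=
  ∑ l ∈ Finset.range (n + 1), (-1 : ℚ) ^ l * b l * n.choose l

theorem gbT_succ (b : ℕ → ℚ) (n : ℕ) :
    gbT b (n + 1) = gbT b n - gbT (fun l => b (l + 1)) n := by
  have e : gbT b n = ∑ l ∈ Finset.range (n + 2), (-1 : ℚ) ^ l * b l * n.choose l := by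
    rw [Finset.sum_range_succ, gbT]; simp
  rw [e, gbT, Finset.sum_range_succ', Finset.sum_range_succ' _ (n + 1), gbT]
  simp only [Nat.choose_succ_succ, Nat.choose_zero_right]
  rw [add_sub_right_comm, ← Finset.sum_sub_distrib]
  congr 1
  refine Finset.sum_congr rfl fun l _ => ?_
  push_cast
  ring

theorem gbT_add (b c : ℕ → ℚ) (n : ℕ) :
    gbT (fun l => b l + c l) n = gbT b n + gbT c n := by
  rw [gbT, gbT, gbT, ← Finset.sum_add_distrib]
  refine Finset.sum_congr rfl fun l _ => ?_
  ring

theorem gb_shift_compl (k : ℕ) (R : Finset ℕ) :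
    gbShift (Finset.range (k + 1 + 1) \ R) = Finset.range (k + 1) \ gbShift R := by
  ext i
  simp [mem_gbShift]

theorem gb_main (k : ℕ) : ∀ (R : Finset ℕ), R ⊆ Finset.range (k + 1) → ∀ n : ℕ,
    gbT (fun l => (gbinom l k (Finset.range (k + 1) \ R) : ℚ)) n
      = (-1) ^ k * (gbinom n k R : ℚ) := by
  induction k with
  | zero =>
    intro R hR n
    simp only [gb_k_zero _ _ hR, gb_k_zero _ _ (Finset.sdiff_subset : Finset.range (0+1) \ R ⊆ _)]
    induction n with
    | zero => by_cases h : 0 ∈ R <;> simp [gbT, h]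
    | succ n ih =>
      rw [gbT_succ, ih]
      by_cases h : 0 ∈ R
      · simp only [h, Finset.mem_sdiff] at ih ⊢
        simp at ih ⊢
        rw [ih]; simp
      · simp [h, gbT]
  | succ k ihk =>
    intro R hR n
    have hR' : gbShift R ⊆ Finset.range (k + 1) := by
      intro i hi
      have := hR ((mem_gbShift R i).1 hi)
      simpa using this
    induction n with
    | zero => simp [gbT, gb_zero_succ]
    | succ n ih =>
      rw [gbT_succ]
      simp only [gb_rec, gb_shift_compl]
      by_cases h : 0 ∈ R
      · have h' : 0 ∉ Finset.range (k + 1 + 1) \ R := by simp [h]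
        simp only [h, h', if_true, if_false, Nat.cast_add]
        rw [gbT_add, ihk _ hR' n]
        push_cast
        ring
      · have h' : 0 ∈ Finset.range (k + 1 + 1) \ R := by simp [h]
        simp only [h, h', if_true, if_false, add_zero]
        rw [ihk _ hR' n, ih]
        push_cast
        ring

/-- For `R ⊆ {0,1,…,k}` and `R^c = {0,1,…,k} \ R`,
`binom(n; k, R) = ∑_{ℓ=0}^{n} (−1)^{ℓ−k} · binom(ℓ; k, R^c) · C(n,ℓ)`. -/
theorem gbinom_reciprocity (n k : ℕ) (R : Finset ℕ) (hR : R ⊆ Finset.range (k + 1)) :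
    (gbinom n k R : ℚ) =
      ∑ ℓ ∈ Finset.range (n + 1),
        (-1 : ℚ) ^ (ℓ - k) * gbinom ℓ k (Finset.range (k + 1) \ R) * n.choose ℓ := by

  have h := gb_main k R hR n
  have hs : (-1 : ℚ) ^ k * (-1) ^ k = 1 := by rw [← mul_pow]; simp
  have : (gbinom n k R : ℚ) = (-1) ^ k *
      gbT (fun l => (gbinom l k (Finset.range (k + 1) \ R) : ℚ)) n := by
    rw [h, ← mul_assoc, hs, one_mul]
  rw [this, gbT, Finset.mul_sum]
  refine Finset.sum_congr rfl fun l _ => ?_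
  by_cases hl : l < k
  · simp [gb_lt k l _ hl]
  · obtain ⟨m, rfl⟩ := Nat.exists_eq_add_of_le (not_lt.1 hl)
    rw [Nat.add_sub_cancel_left, pow_add, ← mul_assoc, ← mul_assoc, ← mul_assoc, hs, one_mul]
end

section
/- In the incidence algebra I(ℕ) of the natural numbers with their usual order, over ℚ, define H(i,j) = j if j = i + 1 and 0 otherwise, and P(i,j) = C(j,i), the ordinary binomial coefficient. Then P = e^H entrywise; that is, for all natural numbers i ≤ j, ∑_{ℓ=0}^{j−i} (1/ℓ!) · H^ℓ(i,j) = C(j,i), where H^0 = δ is the identity of the incidence algebra. -/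
/-- The identity `δ` of the incidence algebra `I(ℕ)` over `ℚ`. -/
def deltaN (i j : ℕ) : ℚ := if i = j then 1 else 0

/-- Convolution in the incidence algebra `I(ℕ)` of the naturals with their usual order:
`(FG)(i,j) = ∑_{i ≤ z ≤ j} F(i,z)·G(z,j)`. -/
def convN (F G : ℕ → ℕ → ℚ) (i j : ℕ) : ℚ := ∑ z ∈ Finset.Icc i j, F i z * G z j

/-- Convolution powers, with `F ^ 0 = δ`. -/
def convPowN (F : ℕ → ℕ → ℚ) : ℕ → ℕ → ℕ → ℚ
  | 0 => deltaN
  | ℓ + 1 => convN F (convPowN F ℓ)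

/-- The element `H` of `I(ℕ)`: `H(i,j) = j` if `j = i + 1`, else `0`. -/
def HN (i j : ℕ) : ℚ := if j = i + 1 then (j : ℚ) else 0

theorem convPowN_HN (l : ℕ) : ∀ i j : ℕ, convPowN HN l i j =
    if j = i + l then ((j.factorial : ℚ) / (i.factorial : ℚ)) else 0 := by
  induction l with
  | zero =>
    intro i j
    have h0 : (i.factorial : ℚ) ≠ 0 := by exact_mod_cast i.factorial_ne_zero
    by_cases hij : i = j
    · subst hij
      simp [convPowN, deltaN, h0]
    · have : ¬ j = i := fun h => hij h.symm
      simp [convPowN, deltaN, hij, this]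
  | succ l ih =>
    intro i j
    have h0 : (i.factorial : ℚ) ≠ 0 := by exact_mod_cast i.factorial_ne_zero
    have h1 : ((i : ℚ) + 1) ≠ 0 := by positivity
    simp only [convPowN, convN, HN, ih, ite_mul, zero_mul, Finset.sum_ite_eq', Finset.mem_Icc]
    by_cases hij : j = i + (l + 1)
    · rw [if_pos (by omega), if_pos (by omega), if_pos hij, Nat.factorial_succ]
      push_cast
      field_simp
    · rw [if_neg hij, if_neg (show ¬ j = i + 1 + l by omega)]
      simp

/-- Call–Velleman: in `I(ℕ)`, `P = e^H`, i.e. for all `i ≤ j`,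
`∑_{ℓ=0}^{j−i} (1/ℓ!) · H^ℓ(i,j) = C(j,i)`. -/
theorem pascal_eq_exp_HN (i j : ℕ) (h : i ≤ j) :
    ∑ ℓ ∈ Finset.range (j - i + 1), (1 / (Nat.factorial ℓ : ℚ)) * convPowN HN ℓ i j
      = j.choose i := by
  simp only [convPowN_HN]
  rw [Finset.sum_eq_single (j - i)]
  · rw [if_pos (by omega), Nat.cast_choose ℚ h]
    have h0 : (i.factorial : ℚ) ≠ 0 := by exact_mod_cast i.factorial_ne_zero
    have h1 : ((j - i).factorial : ℚ) ≠ 0 := by exact_mod_cast (j - i).factorial_ne_zero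
    field_simp
  · intro b _ hb
    rw [if_neg (by omega), mul_zero]
  · intro hn
    exact absurd (Finset.mem_range.mpr (by omega)) hn
end

section
/- Let A = {0,1} and define the parity function xor : A* → {0,1} by xor(w) = 1 if w has an odd number of ones and xor(w) = 0 otherwise. Then for every word w ∈ A*, xor(w) = ∑_{k=1}^{|w|} (−2)^{k−1} · binom(w, 1^k), where 1^k denotes the word consisting of k ones. -/
theorem card_true_aux (w : List Bool) :
    (Finset.univ.filter (fun i : Fin w.length => w.get i = true)).card = w.count true := by
  induction w with
  | nil => simp
  | cons a l ih =>
    have := Fin.card_filter_univ_succ (n := l.length) (fun i => (a :: l).get i = true)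
    refine Eq.trans this ?_
    cases a <;> simp_all

theorem subwordCount_aux (w u : List Bool) (hu : ∀ i : Fin u.length, u.get i = true) :
    subwordCount w u = (w.count true).choose u.length := by
  rw [← card_true_aux, ← Finset.card_powersetCard, subwordCount]
  refine Finset.card_bij (fun φ _ => Finset.univ.image φ) ?_ ?_ ?_
  · intro φ hφ
    simp only [Finset.mem_filter, Finset.mem_univ, true_and, hu] at hφ
    have hm : StrictMono φ := fun i j h => hφ.1 i j h
    rw [Finset.mem_powersetCard]
    refine ⟨?_, ?_⟩
    · intro x hx
      obtain ⟨i, -, rfl⟩ := Finset.mem_image.1 hx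
      exact Finset.mem_filter.2 ⟨Finset.mem_univ _, (hφ.2 i).symm⟩
    · rw [Finset.card_image_of_injective _ hm.injective]; simp
  · intro φ hφ ψ hψ h
    simp only [Finset.mem_filter, Finset.mem_univ, true_and] at hφ hψ
    have h1 : StrictMono φ := fun i j h => hφ.1 i j h
    have h2 : StrictMono ψ := fun i j h => hψ.1 i j h
    refine (StrictMono.range_inj h1 h2).1 ?_
    have := congrArg (fun s : Finset (Fin w.length) => (s : Set (Fin w.length))) h
    simpa using this
  · intro s hs
    rw [Finset.mem_powersetCard] at hs
    refine ⟨fun i => s.orderEmbOfFin hs.2 i, ?_, ?_⟩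
    · simp only [Finset.mem_filter, Finset.mem_univ, true_and, hu]
      refine ⟨fun i j h => (s.orderEmbOfFin hs.2).strictMono h, fun i => ?_⟩
      exact (Finset.mem_filter.1 (hs.1 (Finset.orderEmbOfFin_mem s hs.2 i))).2.symm
    · apply Finset.coe_injective
      simp

theorem sum_aux (m n : ℕ) (h : m ≤ n) :
    ∑ k ∈ Finset.range (n + 1), (-2 : ℚ) ^ k * (m.choose k : ℚ) = (-1) ^ m := by
  have := add_pow (-2 : ℚ) 1 m
  norm_num at this
  rw [this]
  symm
  apply Finset.sum_subset
  · intro x; simp; omega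
  · intro x _ hx
    rw [Nat.choose_eq_zero_of_lt (by simpa using hx)]; simp

/-- Parity: for every word `w` over `{0,1}` (modelled as `Bool`, with `1 = true`),
`xor(w) = ∑_{k=1}^{|w|} (−2)^{k−1} · binom(w, 1^k)`, where `xor(w)` is `1` if `w` has an
odd number of ones and `0` otherwise. -/
theorem xor_mahler_expansion (w : List Bool) :
    (if w.count true % 2 = 1 then 1 else 0 : ℚ) =
      ∑ k ∈ Finset.Icc 1 w.length,
        (-2 : ℚ) ^ (k - 1) * subwordCount w (List.replicate k true) := by
  have h1 : ∀ k, subwordCount w (List.replicate k true) = (w.count true).choose k := by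
    intro k
    rw [subwordCount_aux _ _ (by simp)]; simp
  simp only [h1]
  have h2 := sum_aux _ _ (List.count_le_length (a := true) (l := w))
  rw [Finset.sum_range_succ'] at h2
  have h3 : ∑ k ∈ Finset.Icc 1 w.length, (-2 : ℚ) ^ (k - 1) * ((w.count true).choose k : ℚ)
      = ∑ k ∈ Finset.range w.length, (-2 : ℚ) ^ k * ((w.count true).choose (k + 1) : ℚ) := by
    have := Finset.sum_Ico_add' (fun k => (-2 : ℚ) ^ (k - 1) * ((w.count true).choose k : ℚ))
      0 w.length 1
    simp only [Nat.add_sub_cancel] at this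
    rw [Finset.range_eq_Ico, this]
    rfl
  rw [h3]
  simp only [pow_succ, mul_right_comm _ (-2 : ℚ), ← Finset.sum_mul] at h2
  simp only [pow_zero, Nat.choose_zero_right, Nat.cast_one, mul_one] at h2
  split_ifs with h
  · rw [(Nat.odd_iff.2 h).neg_one_pow] at h2
    linarith
  · rw [(Nat.even_iff.2 (by omega)).neg_one_pow] at h2
    linarith
end
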